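/- arXiv:0801.4524 — 3 statements merged into one kernel-verified Lean document; each statement's English description precedes it below -/
import Mathlib

section
/- Let V be a quiver and x a vertex of V. Call a path p from x to x in V primitive if p is not the empty path and, whenever p is written as the composite q.comp r of two paths q, r from x to x, either q or r is the empty path. Then every path p from x to x in V admits a unique factorization into primitive loops: there exists a unique (possibly empty) finite list [p₁, …, p_k] of primitive paths from x to x such that p equals the composite p₁.comp p₂ … .comp p_k (the empty list corresponding to the empty path). -/
universe v u

/-- The composite of a list of loops at `x`, the empty list giving the empty path,
and `[p₁, …, p_k]` giving `p₁.comp p₂ … .comp p_k`. -/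
def composeLoopList {V : Type u} [Quiver.{v + 1} V] {x : V} :
    List (Quiver.Path x x) → Quiver.Path x x
  | [] => Quiver.Path.nil
  | q :: L => q.comp (composeLoopList L)

/-- A loop `p` at `x` is primitive if it is not the empty path and whenever
`p = q.comp r` for loops `q, r` at `x`, either `q` or `r` is the empty path. -/
def PrimitiveLoop {V : Type u} [Quiver.{v + 1} V] {x : V} (p : Quiver.Path x x) : Prop :=
  p ≠ Quiver.Path.nil ∧
    ∀ q r : Quiver.Path x x, p = q.comp r →
      q = Quiver.Path.nil ∨ r = Quiver.Path.nil

theorem path_levi {V : Type u} [Quiver.{v + 1} V] {a b c d : V} (p : Quiver.Path a b)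
    (r : Quiver.Path b d) (q : Quiver.Path a c) (s : Quiver.Path c d)
    (h : p.comp r = q.comp s) :
    (∃ t : Quiver.Path b c, q = p.comp t ∧ r = t.comp s) ∨
      (∃ t : Quiver.Path c b, p = q.comp t ∧ s = t.comp r) := by
  induction r with
  | nil => exact Or.inr ⟨s, h, rfl⟩
  | cons r e ih =>
    cases s with
    | nil => exact Or.inl ⟨r.cons e, h.symm, rfl⟩
    | cons s f =>
      rw [Quiver.Path.comp_cons, Quiver.Path.comp_cons] at h
      obtain rfl := Quiver.Path.obj_eq_of_cons_eq_cons h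
      have h1 := eq_of_heq (Quiver.Path.heq_of_cons_eq_cons h)
      obtain rfl := eq_of_heq (Quiver.Path.hom_heq_of_cons_eq_cons h)
      rcases ih s h1 with ⟨t, h2, h3⟩ | ⟨t, h2, h3⟩
      · exact Or.inl ⟨t, h2, by rw [h3, Quiver.Path.comp_cons]⟩
      · exact Or.inr ⟨t, h2, by rw [h3, Quiver.Path.comp_cons]⟩

theorem composeLoopList_append {V : Type u} [Quiver.{v + 1} V] {x : V}
    (L M : List (Quiver.Path x x)) :
    composeLoopList (L ++ M) = (composeLoopList L).comp (composeLoopList M) := by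
  induction L with
  | nil => simp [composeLoopList]
  | cons q L ih => simp [composeLoopList, ih]

theorem exists_primitive_fact {V : Type u} [Quiver.{v + 1} V] {x : V} (n : ℕ) :
    ∀ p : Quiver.Path x x, p.length ≤ n → ∃ L : List (Quiver.Path x x),
      (∀ q ∈ L, PrimitiveLoop q) ∧ p = composeLoopList L := by
  induction n with
  | zero =>
    intro p hp
    exact ⟨[], by simp, p.eq_nil_of_length_zero (by omega)⟩
  | succ n ih =>
    intro p hp
    by_cases h0 : p = Quiver.Path.nil
    · exact ⟨[], by simp, h0⟩
    by_cases h1 : PrimitiveLoop p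
    · exact ⟨[p], by simpa using h1, by simp [composeLoopList]⟩
    have h2 : ∃ q r : Quiver.Path x x, p = q.comp r ∧
        q ≠ Quiver.Path.nil ∧ r ≠ Quiver.Path.nil := by
      by_contra! hc
      exact h1 ⟨h0, fun q r hqr => or_iff_not_imp_left.2 (hc q r hqr)⟩
    obtain ⟨q, r, rfl, hq, hr⟩ := h2
    have hq' : q.length ≠ 0 := fun h => hq (q.eq_nil_of_length_zero h)
    have hr' : r.length ≠ 0 := fun h => hr (r.eq_nil_of_length_zero h)
    rw [Quiver.Path.length_comp] at hp
    obtain ⟨L, hL, hL'⟩ := ih q (by omega)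
    obtain ⟨M, hM, hM'⟩ := ih r (by omega)
    refine ⟨L ++ M, ?_, by rw [composeLoopList_append, ← hL', ← hM']⟩
    intro s hs
    rcases List.mem_append.1 hs with h | h
    · exact hL s h
    · exact hM s h

theorem primitive_fact_unique {V : Type u} [Quiver.{v + 1} V] {x : V}
    (L : List (Quiver.Path x x)) : ∀ M : List (Quiver.Path x x),
      (∀ q ∈ L, PrimitiveLoop q) → (∀ q ∈ M, PrimitiveLoop q) →
      composeLoopList L = composeLoopList M → L = M := by
  induction L with
  | nil =>
    intro M _ hM h
    cases M with
    | nil => rfl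
    | cons q M =>
      exact absurd (q.eq_nil_of_length_zero (Quiver.Path.comp_eq_nil_iff.1 h.symm).1) (hM q (by simp)).1
  | cons p L ih =>
    intro M hL hM h
    cases M with
    | nil => exact absurd (p.eq_nil_of_length_zero (Quiver.Path.comp_eq_nil_iff.1 h).1) (hL p (by simp)).1
    | cons q M =>
      have hp := hL p (by simp)
      have hq := hM q (by simp)
      have key : p = q := by
        rcases path_levi _ _ _ _ h with ⟨t, h2, h3⟩ | ⟨t, h2, h3⟩
        · have ht := (hq.2 _ _ h2).resolve_left hp.1
          rw [h2, ht, Quiver.Path.comp_nil]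
        · have ht := (hp.2 _ _ h2).resolve_left hq.1
          rw [h2, ht, Quiver.Path.comp_nil]
      subst key
      have h' := Quiver.Path.comp_injective_right p h
      rw [ih M (fun s hs => hL s (by simp [hs])) (fun s hs => hM s (by simp [hs])) h']

/-- Every loop at `x` admits a unique factorization into primitive loops. -/
theorem unique_primitive_factorization {V : Type u} [Quiver.{v + 1} V] (x : V)
    (p : Quiver.Path x x) :
    ∃! L : List (Quiver.Path x x),
      (∀ q ∈ L, PrimitiveLoop q) ∧ p = composeLoopList L := by
  obtain ⟨L, hL, h⟩ := exists_primitive_fact p.length p le_rfl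
  exact ⟨L, ⟨hL, h⟩, fun M hM => primitive_fact_unique M L hM.1 hL (hM.2.symm.trans h)⟩
end

section
/- Let V be a quiver and x a vertex of V, regarded as an object of the path category Paths V (the free category on V, whose morphisms from a to b are the paths from a to b in V, with composition given by concatenation of paths). Then the endomorphism monoid of x in Paths V is isomorphic, as a monoid, to the free monoid on the set of primitive loops at x, i.e. there is a multiplicative isomorphism End(x) ≃* FreeMonoid {p : Quiver.Path x x // p ≠ nil ∧ ∀ q r : Quiver.Path x x, p = q.comp r → q = nil ∨ r = nil}. -/
universe v u

open CategoryTheory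

theorem path_levi_s2 {V : Type u} [Quiver.{v + 1} V] {a b d : V} (q₁ : Quiver.Path b d) :
    ∀ {c : V} (p₁ : Quiver.Path a b) (p₂ : Quiver.Path a c) (q₂ : Quiver.Path c d),
      p₁.comp q₁ = p₂.comp q₂ → q₁.length ≤ q₂.length →
      ∃ r : Quiver.Path c b, q₂ = r.comp q₁ ∧ p₁ = p₂.comp r := by
  induction q₁ with
  | nil => intro c p₁ p₂ q₂ h _; exact ⟨q₂, rfl, h⟩
  | cons q₁ f₁ ih =>
    intro c p₁ p₂ q₂ h hl
    rcases q₂ with _ | ⟨q₂, f₂⟩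
    · simp at hl
    · simp only [Quiver.Path.comp_cons, Quiver.Path.cons.injEq] at h
      obtain rfl := h.1
      obtain ⟨r, rfl, rfl⟩ := ih _ _ _ h.2.1.eq (by simpa using hl)
      obtain rfl := h.2.2.eq
      exact ⟨r, rfl, rfl⟩

/-- Primitive loops. -/
abbrev PrimLoop {V : Type u} [Quiver.{v + 1} V] (x : V) :=
  {p : Quiver.Path x x // p ≠ Quiver.Path.nil ∧
          ∀ q r : Quiver.Path x x, p = q.comp r →
            q = Quiver.Path.nil ∨ r = Quiver.Path.nil}

/-- Composite of a list of primitive loops (last one first). -/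
def loopProd {V : Type u} [Quiver.{v + 1} V] {x : V} : List (PrimLoop x) → Quiver.Path x x
  | [] => Quiver.Path.nil
  | a :: l => (loopProd l).comp a.1

theorem loopProd_append {V : Type u} [Quiver.{v + 1} V] {x : V} (l m : List (PrimLoop x)) :
    loopProd (l ++ m) = (loopProd m).comp (loopProd l) := by
  induction l with
  | nil => rfl
  | cons a l ih => simp [loopProd, ih]

theorem prim_length {V : Type u} [Quiver.{v + 1} V] {x : V} {p : Quiver.Path x x}
    (h : p ≠ Quiver.Path.nil) : 0 < p.length :=
  Nat.pos_of_ne_zero fun h0 => h (Quiver.Path.eq_nil_of_length_zero p h0)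

theorem loopProd_surj {V : Type u} [Quiver.{v + 1} V] {x : V} (n : ℕ) :
    ∀ p : Quiver.Path x x, p.length = n → ∃ l, loopProd l = p := by
  induction n using Nat.strong_induction_on with
  | _ n ih =>
    intro p hp
    by_cases h0 : p = Quiver.Path.nil
    · exact ⟨[], h0.symm⟩
    by_cases hpr : ∀ q r : Quiver.Path x x, p = q.comp r →
            q = Quiver.Path.nil ∨ r = Quiver.Path.nil
    · exact ⟨[⟨p, h0, hpr⟩], by simp [loopProd]⟩
    · push Not at hpr
      obtain ⟨q, r, rfl, hq, hr⟩ := hpr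
      have h1 := prim_length hq
      have h2 := prim_length hr
      rw [Quiver.Path.length_comp] at hp
      obtain ⟨l, hl⟩ := ih q.length (by omega) q rfl
      obtain ⟨m, hm⟩ := ih r.length (by omega) r rfl
      exact ⟨m ++ l, by rw [loopProd_append, hl, hm]⟩

theorem prim_cancel {V : Type u} [Quiver.{v + 1} V] {x : V} (a b : PrimLoop x)
    (p q : Quiver.Path x x) (h : p.comp a.1 = q.comp b.1) (hl : a.1.length ≤ b.1.length) :
    a = b ∧ p = q := by
  obtain ⟨r, hr, rfl⟩ := path_levi_s2 _ _ _ _ h hl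
  rcases b.2.2 _ _ hr with rfl | h
  · exact ⟨Subtype.ext (by simpa using hr.symm), rfl⟩
  · exact absurd h a.2.1

theorem loopProd_inj {V : Type u} [Quiver.{v + 1} V] {x : V} (l : List (PrimLoop x)) :
    ∀ m, loopProd l = loopProd m → l = m := by
  induction l with
  | nil =>
    rintro (_ | ⟨b, m⟩) h
    · rfl
    · have h1 := congrArg Quiver.Path.length h
      have h2 := prim_length b.2.1
      simp only [loopProd, Quiver.Path.length_comp, Quiver.Path.length_nil] at h1
      omega
  | cons a l ih =>
    rintro (_ | ⟨b, m⟩) h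
    · have h1 := congrArg Quiver.Path.length h
      have h2 := prim_length a.2.1
      simp only [loopProd, Quiver.Path.length_comp, Quiver.Path.length_nil] at h1
      omega
    · rcases le_total a.1.length b.1.length with hl | hl
      · obtain ⟨rfl, h2⟩ := prim_cancel a b _ _ h hl
        rw [ih _ h2]
      · obtain ⟨rfl, h2⟩ := prim_cancel b a _ _ h.symm hl
        rw [ih _ h2.symm]

/-- The endomorphism monoid of a vertex `x` in the path category `Paths V`
is isomorphic, as a monoid, to the free monoid on the set of primitive loops at `x`. -/
theorem end_paths_iso_freeMonoid_primitive_loops {V : Type u} [Quiver.{v + 1} V] (x : V) :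
    Nonempty
      (End ((Paths.of (V := V)).obj x) ≃*
        FreeMonoid {p : Quiver.Path x x // p ≠ Quiver.Path.nil ∧
          ∀ q r : Quiver.Path x x, p = q.comp r →
            q = Quiver.Path.nil ∨ r = Quiver.Path.nil}) := by
  let e : List (PrimLoop x) ≃ Quiver.Path x x :=
    Equiv.ofBijective loopProd
      ⟨fun l m h => loopProd_inj l m h, fun p => loopProd_surj _ p rfl⟩
  let f : FreeMonoid (PrimLoop x) ≃* End ((Paths.of (V := V)).obj x) :=
    { toFun := fun l => e l.toList
      invFun := fun p => FreeMonoid.ofList (e.symm p)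
      left_inv := fun l => e.symm_apply_apply l
      right_inv := fun p => e.apply_symm_apply p
      map_mul' := fun l m => loopProd_append l m }
  exact ⟨f.symm⟩
end

section
/- Let C be a category which is free on a graph, i.e. there exists a quiver V and an isomorphism of categories between C and the path category Paths V. Then for every object x of C, the full subcategory of C on the single object x is again free on a graph; equivalently, the endomorphism monoid of x in C is a free monoid: there exists a type S and a multiplicative isomorphism End(x) ≃* FreeMonoid S. -/
universe v u v' u'

open CategoryTheory

theorem free_aux_levi {V : Type u'} [Quiver.{v'} V] {a b c d : V}
    (p : Quiver.Path a b) (q : Quiver.Path b d) (r : Quiver.Path a c) (s : Quiver.Path c d)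
    (h : p.comp q = r.comp s) (hl : p.length ≤ r.length) :
    ∃ w : Quiver.Path b c, r = p.comp w ∧ q = w.comp s := by
  induction s with
  | nil => exact ⟨q, h.symm, rfl⟩
  | cons s e ih =>
    cases q with
    | nil =>
      have := congrArg Quiver.Path.length h
      simp at this
      omega
    | cons q e' =>
      simp only [Quiver.Path.comp_cons, Quiver.Path.cons.injEq] at h
      obtain ⟨rfl, h1, h2⟩ := h
      obtain ⟨w, hw, rfl⟩ := ih q h1.eq
      exact ⟨w, hw, by rw [h2.eq]; rfl⟩

theorem free_aux_monoid {M : Type v} [Monoid M] (l : M → ℕ)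
    (hmul : ∀ a b, l (a * b) = l a + l b) (hone : ∀ a, l a = 0 → a = 1)
    (hlevi : ∀ a b c d, a * b = c * d → l a ≤ l c → ∃ w, c = a * w ∧ b = w * d) :
    ∃ S : Type v, Nonempty (M ≃* FreeMonoid S) := by
  let S := {a : M // a ≠ 1 ∧ ∀ b c, a = b * c → b = 1 ∨ c = 1}
  have h1 : l 1 = 0 := by have := hmul 1 1; simp at this; exact this
  let φ : FreeMonoid S →* M := FreeMonoid.lift Subtype.val
  have hcons : ∀ (s : S) (x : FreeMonoid S), φ (FreeMonoid.of s * x) = s.1 * φ x := by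
    intro s x; simp [φ]
  have hne : ∀ (s : S) (x : FreeMonoid S), s.1 * φ x ≠ 1 := by
    intro s x h
    have := congrArg l h
    rw [hmul, h1] at this
    exact s.2.1 (hone _ (by omega))
  have key : ∀ (s t : S) (x y : M), s.1 * x = t.1 * y → l s.1 ≤ l t.1 → s = t ∧ x = y := by
    intro s t x y h hl
    obtain ⟨w, hw, hx⟩ := hlevi _ _ _ _ h hl
    rcases t.2.2 _ _ hw with h' | h'
    · exact absurd h' s.2.1
    · subst h'
      exact ⟨Subtype.ext (by simpa using hw.symm), by simpa using hx⟩
  have hinj : Function.Injective φ := by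
    intro x
    induction x using FreeMonoid.recOn with
    | one =>
      intro y h
      cases y using FreeMonoid.casesOn with
      | one => rfl
      | of_mul t y => rw [hcons, map_one] at h; exact absurd h.symm (hne _ _)
    | of_mul s x ih =>
      intro y h
      cases y using FreeMonoid.casesOn with
      | one => rw [hcons, map_one] at h; exact absurd h (hne _ _)
      | of_mul t y =>
        rw [hcons, hcons] at h
        have : s = t ∧ φ x = φ y := by
          rcases le_total (l s.1) (l t.1) with hl | hl
          · exact key _ _ _ _ h hl
          · have := key _ _ _ _ h.symm hl
            exact ⟨this.1.symm, this.2.symm⟩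
        rw [this.1, ih this.2]
  have hsurj : ∀ n a, l a = n → ∃ x, φ x = a := by
    intro n
    induction n using Nat.strong_induction_on with
    | _ n ih =>
      intro a ha
      by_cases ha1 : a = 1
      · exact ⟨1, by rw [ha1, map_one]⟩
      by_cases hi : ∀ b c, a = b * c → b = 1 ∨ c = 1
      · exact ⟨FreeMonoid.of ⟨a, ha1, hi⟩, by simp [φ]⟩
      · push Not at hi
        obtain ⟨b, c, rfl, hb, hc⟩ := hi
        have hb' : l b ≠ 0 := fun h => hb (hone _ h)
        have hc' : l c ≠ 0 := fun h => hc (hone _ h)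
        rw [hmul] at ha
        obtain ⟨x, rfl⟩ := ih (l b) (by omega) b rfl
        obtain ⟨y, rfl⟩ := ih (l c) (by omega) c rfl
        exact ⟨x * y, map_mul _ _ _⟩
  exact ⟨S, ⟨(MulEquiv.ofBijective φ ⟨hinj, fun a => hsurj _ a rfl⟩).symm⟩⟩

/-- If a category `C` is free on a graph, i.e. it is isomorphic (as a category)
to the path category `Paths V` of some quiver `V`, then for every object `x` of `C`
the endomorphism monoid of `x` (the morphism monoid of the full subcategory of `C`
on the single object `x`) is a free monoid. -/
theorem end_of_free_category_is_free_monoid {C : Type u} [Category.{v} C]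
    (hfree : ∃ (V : Type u') (_ : Quiver.{v' + 1} V)
      (F : C ⥤ Paths V) (G : Paths V ⥤ C),
        F ⋙ G = 𝟭 C ∧ G ⋙ F = 𝟭 (Paths V)) :
    ∀ x : C, ∃ S : Type v, Nonempty (End x ≃* FreeMonoid S) := by
  obtain ⟨V, _, F, G, h1, h2⟩ := hfree
  intro x
  let e : C ≌ Paths V := CategoryTheory.Equivalence.mk F G (eqToIso h1.symm) (eqToIso h2)
  have hE : F.IsEquivalence := e.isEquivalence_functor
  let P : (x ⟶ x) → @Quiver.Path V _ (F.obj x) (F.obj x) := fun f => F.map f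
  have hP : ∀ f g : x ⟶ x, P (f ≫ g) = (P f).comp (P g) := fun f g => F.map_comp f g
  have hPinj : ∀ f g, P f = P g → f = g := fun f g h => F.map_injective h
  have hPsurj : ∀ p, ∃ f, P f = p := fun p => F.map_surjective p
  have hlev : ∀ a b c d : x ⟶ x, a ≫ b = c ≫ d → (P a).length ≤ (P c).length →
      ∃ w, c = a ≫ w ∧ b = w ≫ d := by
    intro a b c d h hl
    obtain ⟨w, hw1, hw2⟩ := free_aux_levi (P a) (P b) (P c) (P d) (by rw [← hP, ← hP, h]) hl
    obtain ⟨w, rfl⟩ := hPsurj w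
    exact ⟨w, hPinj _ _ (by rw [hP, hw1]), hPinj _ _ (by rw [hP, hw2])⟩
  have hlen : ∀ a b : x ⟶ x, (P (a ≫ b)).length = (P a).length + (P b).length := by
    intro a b; rw [hP]; exact Quiver.Path.length_comp _ _
  refine free_aux_monoid (M := End x) (fun f => (P f).length) ?_ ?_ ?_
  · intro a b
    exact (hlen b a).trans (Nat.add_comm _ _)
  · intro a ha
    refine hPinj _ _ ?_
    exact (Quiver.Path.eq_nil_of_length_zero _ ha).trans (F.map_id x).symm
  · intro a b c d h hl
    have h' : d ≫ c = b ≫ a := h.symm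
    have := congrArg (fun f => (P f).length) h'
    simp only [hlen] at this
    obtain ⟨w, hw1, hw2⟩ := hlev d c b a h' (by have hl2 : (P a).length ≤ (P c).length := hl; omega)
    exact ⟨w, hw2, hw1⟩
end
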